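/- Let R be a K-vector space and M the recursive brace operation on R-decorated planar rooted trees. For every decorated tree t and decorated trees s_1,…,s_n, M(t; s_1⋯s_n) equals the sum of all decorated trees obtained by grafting s_1,…,s_n onto vertices of t, in all possible ways such that in the resulting planar tree the grafted subtrees s_1,…,s_n appear in left-to-right order. -/

import Mathlib

/-! Common setup: `R`-decorated planar rooted trees, decorated forests,
the free module `R^𝒯` they span, and the Loday–Ronco product on `T(R^𝒯)`
induced by the recursive brace operation `M(B₊ˣ(f₁); f₂) = B₊ˣ(f₁ ⋆ f₂)`. -/

/-- Planar rooted trees with vertices decorated by elements of `R`. -/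
inductive PTree (R : Type*) : Type _
  | node : R → List (PTree R) → PTree R

section

variable (K : Type*) [Field K]
variable {R : Type*}

/-- All splittings of a list into a prefix and a suffix. -/
def splits {α : Type*} (l : List α) : List (List α × List α) :=
  (List.range (l.length + 1)).map fun i => (l.take i, l.drop i)

/-- All factorizations of a list into `k` (possibly empty) consecutive factors. -/
def splitsN {α : Type*} : ℕ → List α → List (List (List α))
  | 0, l => if l.isEmpty then [[]] else []
  | k + 1, l => (splits l).flatMap fun p => (splitsN k p.2).map fun r => p.1 :: r

/-- Decorated forests: words of decorated trees. -/
abbrev Forest (R : Type*) := List (PTree R)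

/-- `B₊ˣ` : grafting of a decorated forest onto a new root decorated by `x`. -/
def Bplus (x : R) (f : Forest R) : PTree R := PTree.node x f

variable (R)

/-- The space `R^𝒯` spanned by the decorated trees. -/
abbrev TreeMod := PTree R →₀ K

/-- The space `T(R^𝒯)` of decorated forests. -/
abbrev ForestMod := Forest R →₀ K

variable {R K}

/-- The element of `T(R^𝒯)` obtained from a word whose letters are linear
combinations of decorated trees, expanding multilinearly (in particular a word
containing the letter `0` gives `0`). -/
noncomputable def wordOf : List (TreeMod K R) → ForestMod K R
  | [] => Finsupp.single ([] : Forest R) 1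
  | a :: rest => a.sum fun t c => c • Finsupp.mapDomain (List.cons t) (wordOf rest)

/-- Extension `M(F;G)` of the brace operation to pairs of forests:
`M(1;1) = 0`, `M(1;s) = s` and `M(t;G) = M(t;G)` for a single tree `t`
(so `M(t;1) = t`), `M(F;G) = 0` if `F` has more than one tree. -/
noncomputable def MextF (Mh : PTree R → Forest R → TreeMod K R) : Forest R → Forest R → TreeMod K R
  | [], [] => 0
  | [], [s] => Finsupp.single s 1
  | [], _ :: _ :: _ => 0
  | [t], ys => Mh t ys
  | _ :: _ :: _, _ => 0

/-- The Loday–Ronco product `X ⋆ Y = Σ_{k≥1} Σ_{X=X¹⋯X^k, Y=Y¹⋯Y^k}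
M(X¹;Y¹)⋯M(X^k;Y^k)` built from a brace operation `Mh` on decorated trees
(with `1 ⋆ 1 = 1`; the terms with `k > |X| + |Y|` vanish, each containing the
letter `M(1;1) = 0`). -/
noncomputable def starRHS (Mh : PTree R → Forest R → TreeMod K R) : Forest R → Forest R → ForestMod K R
  | [], [] => Finsupp.single ([] : Forest R) 1
  | X, Y =>
    ((List.range (X.length + Y.length)).flatMap fun k =>
      (splitsN (k + 1) X).flatMap fun Xs =>
        (splitsN (k + 1) Y).map fun Ys =>
          wordOf (List.zipWith (MextF Mh) Xs Ys)).sum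

/-- `Mh` and `star` satisfy the defining recursion of the brace operation on
decorated trees: `M(B₊ˣ(f₁); f₂) = B₊ˣ(f₁ ⋆ f₂)` (with `B₊ˣ` extended linearly),
where `⋆` is the Loday–Ronco product built from `Mh`. -/
def IsTreeBrace (Mh : PTree R → Forest R → TreeMod K R)
    (star : Forest R → Forest R → ForestMod K R) : Prop :=
  (∀ (x : R) (f₁ f₂ : Forest R),
      Mh (Bplus x f₁) f₂ = Finsupp.mapDomain (Bplus x) (star f₁ f₂)) ∧
  (∀ X Y : Forest R, star X Y = starRHS Mh X Y)

end

section

variable {K : Type*} [Field K] {R : Type*}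

mutual
/-- All trees obtained by grafting the ordered trees `ss` onto vertices of `t`,
in all possible ways preserving the left-to-right order of the `ss` in the
resulting planar tree (each way listed once). -/
def graftT : PTree R → List (PTree R) → List (PTree R)
  | PTree.node x cs, ss => (graftF cs ss).map (PTree.node x)

/-- All forests obtained from the forest `cs` by inserting each tree of `ss`
among the trees of `cs` or grafting it onto one of their vertices, in all
possible order-preserving ways. -/
def graftF : List (PTree R) → List (PTree R) → List (List (PTree R))
  | [], ss => [ss]
  | c :: cs, ss =>
      (splits ss).flatMap fun p =>
        (splits p.2).flatMap fun p2 =>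
          (graftT c p2.1).flatMap fun c' =>
            (graftF cs p2.2).map fun tail => p.1 ++ c' :: tail
end

/-!
In a term of `X ⋆ Y` whose first factor `M(X¹;Y¹)` is nonzero, `X¹` has at most one tree, and if
`X¹ = 1` then `Y¹` is a single tree. Splitting off this first factor gives the recursion
`(x X) ⋆ (y Y) = y ((x X) ⋆ Y) + Σ_{y Y = Y¹ Y²} M(x;Y¹) (X ⋆ Y²)`.
The graftings of `y Y` onto `x X` satisfy the same recursion, since `y` is either the first tree of
the resulting forest or is grafted onto `x` or further to the right. Hence `X ⋆ Y` is the sum of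
the graftings onto `X`, provided that `M` is the sum of the graftings onto each tree of `X`, and
`M(B₊ˣ(f₁); f₂) = B₊ˣ(f₁ ⋆ f₂)` transfers this from the children of a root to the whole tree.
-/

theorem PTree.induction_on_children {motive : PTree R → Prop}
    (node : ∀ x cs, (∀ c ∈ cs, motive c) → motive (.node x cs)) (t : PTree R) : motive t :=
  PTree.rec (motive_2 := fun cs => ∀ c ∈ cs, motive c) node (List.forall_mem_nil _)
    (fun _ _ hc hcs => List.forall_mem_cons.2 ⟨hc, hcs⟩) t

section ListSums

variable {α β M : Type*}

theorem list_sum_flatMap [AddMonoid M] (l : List α) (f : α → List M) :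
    (l.flatMap f).sum = (l.map fun a => (f a).sum).sum := by
  rw [List.flatMap, List.sum_flatten, List.map_map, Function.comp_def]

variable [AddCommMonoid M]

theorem list_sum_map_sum_map_comm (l : List α) (m : List β) (f : α → β → M) :
    (l.map fun a => (m.map (f a)).sum).sum = (m.map fun b => (l.map fun a => f a b).sum).sum := by
  simpa using Multiset.sum_map_sum_map (l : Multiset α) (m : Multiset β) (f := f)

theorem finset_sum_list_sum_map_comm (s : Finset α) (l : List β) (f : α → β → M) :
    ∑ a ∈ s, (l.map (f a)).sum = (l.map fun b => ∑ a ∈ s, f a b).sum := by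
  simpa using (Multiset.sum_map_sum (m := (l : Multiset β)) (s := s) (f := fun b a => f a b)).symm

end ListSums

section Splits

variable {α M : Type*}

theorem splits_nil : splits ([] : List α) = [([], [])] := rfl

theorem splits_cons (a : α) (l : List α) :
    splits (a :: l) = ([], a :: l) :: (splits l).map fun p => (a :: p.1, p.2) := by
  simp [splits, List.range_succ_eq_map, Function.comp_def]

theorem length_add_length_of_mem_splits {l : List α} {p : List α × List α} (hp : p ∈ splits l) :
    p.1.length + p.2.length = l.length := by
  obtain ⟨i, -, rfl⟩ := List.mem_map.1 hp
  rw [← List.length_append, List.take_append_drop]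

variable [AddMonoid M]

theorem sum_map_splits_of_cons_eq_zero (l : List α) (f : List α → List α → M)
    (hf : ∀ a u v, f (a :: u) v = 0) : ((splits l).map fun p => f p.1 p.2).sum = f [] l := by
  cases l <;> simp [splits_nil, splits_cons, Function.comp_def, hf]

theorem sum_map_splits_cons_of_cons_cons_eq_zero (a : α) (l : List α) (f : List α → List α → M)
    (hf : ∀ a b u v, f (a :: b :: u) v = 0) :
    ((splits (a :: l)).map fun p => f p.1 p.2).sum = f [] (a :: l) + f [a] l := by
  rw [splits_cons, List.map_cons, List.map_map, List.sum_cons]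
  exact congrArg _ (sum_map_splits_of_cons_eq_zero l (fun u v => f (a :: u) v) (hf a))

end Splits

section FormalSum

variable {α β S : Type*} [Semiring S]

/-- The sum of the entries of a list, counted with multiplicity, in the free module on their
type. -/
noncomputable def formalSum (S : Type*) [Semiring S] (l : List α) : α →₀ S :=
  (l.map fun a => Finsupp.single a 1).sum

theorem formalSum_singleton (a : α) : formalSum S [a] = Finsupp.single a 1 := by
  simp [formalSum]

theorem formalSum_append (l m : List α) :
    formalSum S (l ++ m) = formalSum S l + formalSum S m := by
  simp [formalSum]

theorem formalSum_flatMap (l : List α) (f : α → List β) :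
    formalSum S (l.flatMap f) = (l.map fun a => formalSum S (f a)).sum := by
  simp only [formalSum, List.map_flatMap, list_sum_flatMap]

theorem formalSum_map (f : α → β) (l : List α) :
    formalSum S (l.map f) = Finsupp.mapDomain f (formalSum S l) := by
  have hsum := map_list_sum (Finsupp.mapDomain.addMonoidHom (M := S) f)
    (l.map fun a => Finsupp.single a 1)
  simpa [formalSum, Function.comp_def] using hsum.symm

end FormalSum

section Prepend

variable {α S : Type*} [CommSemiring S]

/-- The concatenation of a linear combination of letters with a linear combination of words, i.e.
left multiplication by elements of degree one in the tensor algebra. -/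
noncomputable def prepend : (α →₀ S) →ₗ[S] (List α →₀ S) →ₗ[S] List α →₀ S :=
  Finsupp.linearCombination S fun a => Finsupp.lmapDomain S S (List.cons a)

theorem prepend_single (a : α) (w : List α →₀ S) :
    prepend (Finsupp.single a 1) w = Finsupp.mapDomain (List.cons a) w := by
  simp [prepend]

theorem prepend_list_sum (v : α →₀ S) (l : List (List α →₀ S)) :
    prepend v l.sum = (l.map (prepend v)).sum :=
  map_list_sum (prepend v) l

theorem prepend_formalSum (l : List α) (m : List (List α)) :
    prepend (formalSum S l) (formalSum S m) =
      formalSum S (l.flatMap fun a => m.map (List.cons a)) := by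
  induction l with
  | nil => simp [formalSum]
  | cons a l ih =>
    rw [List.flatMap_cons, formalSum_append, formalSum_map, ← ih, ← prepend_single,
      ← LinearMap.add_apply, ← map_add, ← formalSum_singleton, ← formalSum_append,
      List.singleton_append]

end Prepend

theorem wordOf_cons (a : TreeMod K R) (l : List (TreeMod K R)) :
    wordOf (a :: l) = prepend a (wordOf l) := by
  simp [wordOf, prepend, Finsupp.linearCombination_apply, Finsupp.sum]

section LodayRonco

variable (Mh : PTree R → Forest R → TreeMod K R)

/-- The terms of the Loday–Ronco product `X ⋆ Y` with exactly `k` factors. -/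
noncomputable def starPart (k : ℕ) (X Y : Forest R) : ForestMod K R :=
  ((splitsN k X).flatMap fun Xs => (splitsN k Y).map fun Ys =>
    wordOf (List.zipWith (MextF Mh) Xs Ys)).sum

theorem starPart_zero_nil_nil : starPart Mh 0 [] [] = Finsupp.single [] 1 := by
  simp [starPart, splitsN, wordOf]

theorem starPart_zero_of_ne_nil {X Y : Forest R} (h : X ≠ [] ∨ Y ≠ []) :
    starPart Mh 0 X Y = 0 := by
  cases X <;> cases Y <;> simp_all [starPart, splitsN]

theorem starPart_succ (k : ℕ) (X Y : Forest R) :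
    starPart Mh (k + 1) X Y = ((splits X).map fun p => ((splits Y).map fun q =>
      prepend (MextF Mh p.1 q.1) (starPart Mh k p.2 q.2)).sum).sum := by
  simp only [starPart, splitsN, list_sum_flatMap, List.flatMap_assoc, List.flatMap_map,
    List.map_flatMap, List.map_map, Function.comp_def, List.zipWith_cons_cons, wordOf_cons,
    prepend_list_sum]
  exact congrArg List.sum (List.map_congr_left fun p _ => list_sum_map_sum_map_comm _ _ _)

/-- Each nonzero factor `M(Xⁱ;Yⁱ)` uses up at least one tree of `X` or `Y`. -/
theorem starPart_eq_zero_of_lt {k : ℕ} {X Y : Forest R} (hk : X.length + Y.length < k) :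
    starPart Mh k X Y = 0 := by
  induction k generalizing X Y with
  | zero => omega
  | succ k ih =>
    rw [starPart_succ]
    refine List.sum_eq_zero (List.forall_mem_map.2 fun p hp =>
      List.sum_eq_zero (List.forall_mem_map.2 fun q hq => ?_))
    have hX := length_add_length_of_mem_splits hp
    have hY := length_add_length_of_mem_splits hq
    by_cases hpq : p.1 = [] ∧ q.1 = []
    · rw [hpq.1, hpq.2, MextF, map_zero, LinearMap.zero_apply]
    · simp only [← List.length_eq_zero_iff] at hpq
      rw [ih (by omega), map_zero]

theorem starRHS_eq_sum_starPart {X Y : Forest R} {N : ℕ} (hN : X.length + Y.length < N) :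
    starRHS Mh X Y = ∑ k ∈ Finset.range N, starPart Mh k X Y := by
  rw [Finset.eventually_constant_sum
    (fun k hk => starPart_eq_zero_of_lt Mh (Nat.lt_of_succ_le hk)) (Nat.succ_le_of_lt hN)]
  by_cases hXY : X = [] ∧ Y = []
  · obtain ⟨rfl, rfl⟩ := hXY
    simp [starRHS, starPart_zero_nil_nil]
  · rw [Finset.sum_range_succ', starPart_zero_of_ne_nil Mh (not_and_or.1 hXY), add_zero, starRHS,
      list_sum_flatMap]
    · rfl
    · simpa using hXY

theorem starRHS_eq_sum_prepend {X Y : Forest R} (h : X ≠ [] ∨ Y ≠ []) :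
    starRHS Mh X Y = ((splits X).map fun p => ((splits Y).map fun q =>
      prepend (MextF Mh p.1 q.1) (starRHS Mh p.2 q.2)).sum).sum := by
  rw [starRHS_eq_sum_starPart Mh (N := X.length + Y.length + 1 + 1) (by omega),
    Finset.sum_range_succ', starPart_zero_of_ne_nil Mh h, add_zero]
  simp only [starPart_succ, finset_sum_list_sum_map_comm, ← map_sum]
  refine congrArg List.sum (List.map_congr_left fun p hp =>
    congrArg List.sum (List.map_congr_left fun q hq => ?_))
  have hX := length_add_length_of_mem_splits hp
  have hY := length_add_length_of_mem_splits hq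
  rw [← starRHS_eq_sum_starPart Mh (by omega)]

theorem sum_prepend_MextF_nil_cons (y : PTree R) (Y : Forest R) (F : Forest R → ForestMod K R) :
    ((splits (y :: Y)).map fun q => prepend (MextF Mh [] q.1) (F q.2)).sum =
      prepend (Finsupp.single y 1) (F Y) := by
  rw [sum_map_splits_cons_of_cons_cons_eq_zero y Y fun u v => prepend (MextF Mh [] u) (F v)] <;>
    simp [MextF]

theorem starRHS_nil_left (Y : Forest R) : starRHS Mh [] Y = Finsupp.single Y 1 := by
  induction Y with
  | nil => rfl
  | cons y Y ih =>
    rw [starRHS_eq_sum_prepend Mh (.inr (List.cons_ne_nil y Y)), splits_nil, List.map_singleton,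
      List.sum_singleton, sum_prepend_MextF_nil_cons, ih, prepend_single, Finsupp.mapDomain_single]

theorem starRHS_cons_left (x : PTree R) (X Y : Forest R) :
    starRHS Mh (x :: X) Y =
      ((splits Y).map fun q => prepend (MextF Mh [] q.1) (starRHS Mh (x :: X) q.2)).sum +
      ((splits Y).map fun q => prepend (Mh x q.1) (starRHS Mh X q.2)).sum := by
  rw [starRHS_eq_sum_prepend Mh (.inl (List.cons_ne_nil x X)),
    sum_map_splits_cons_of_cons_cons_eq_zero x X fun u v =>
      ((splits Y).map fun q => prepend (MextF Mh u q.1) (starRHS Mh v q.2)).sum] <;>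
    simp [MextF]

theorem starRHS_cons_nil (x : PTree R) (X : Forest R) :
    starRHS Mh (x :: X) [] = prepend (Mh x []) (starRHS Mh X []) := by
  rw [starRHS_cons_left]
  simp [splits_nil, MextF]

theorem starRHS_cons_cons (x y : PTree R) (X Y : Forest R) :
    starRHS Mh (x :: X) (y :: Y) = prepend (Finsupp.single y 1) (starRHS Mh (x :: X) Y) +
      ((splits (y :: Y)).map fun q => prepend (Mh x q.1) (starRHS Mh X q.2)).sum := by
  rw [starRHS_cons_left, sum_prepend_MextF_nil_cons]

end LodayRonco

theorem graftF_cons_nil (c : PTree R) (cs : Forest R) :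
    graftF (c :: cs) [] = (graftT c []).flatMap fun t => (graftF cs []).map (List.cons t) := by
  simp [graftF, splits_nil]

theorem graftF_cons_cons (c s : PTree R) (cs ss : Forest R) :
    graftF (c :: cs) (s :: ss) =
      ((splits (s :: ss)).flatMap fun q =>
        (graftT c q.1).flatMap fun t => (graftF cs q.2).map (List.cons t)) ++
      (graftF (c :: cs) ss).map (List.cons s) := by
  rw [graftF, splits_cons, List.flatMap_cons, ← splits_cons, List.flatMap_map, graftF]
  simp [List.map_flatMap, Function.comp_def]

theorem starRHS_eq_formalSum_graftF {Mh : PTree R → Forest R → TreeMod K R} {X : Forest R}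
    (hX : ∀ x ∈ X, ∀ ss, Mh x ss = formalSum K (graftT x ss)) (Y : Forest R) :
    starRHS Mh X Y = formalSum K (graftF X Y) := by
  induction X generalizing Y with
  | nil => rw [starRHS_nil_left, graftF, formalSum_singleton]
  | cons x X ihX =>
    obtain ⟨hx, hX'⟩ := List.forall_mem_cons.1 hX
    have hstar := ihX hX'
    induction Y with
    | nil => rw [starRHS_cons_nil, hx, hstar, prepend_formalSum, graftF_cons_nil]
    | cons y Y ihY =>
      simp only [starRHS_cons_cons, hx, hstar, prepend_formalSum, ihY, prepend_single]
      rw [graftF_cons_cons, formalSum_append, formalSum_flatMap, formalSum_map, add_comm]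

theorem IsTreeBrace.apply_node {Mh : PTree R → Forest R → TreeMod K R}
    {star : Forest R → Forest R → ForestMod K R} (h : IsTreeBrace Mh star) (x : R)
    (cs ss : Forest R) :
    Mh (PTree.node x cs) ss = Finsupp.mapDomain (PTree.node x) (starRHS Mh cs ss) := by
  rw [← h.2]
  exact h.1 x cs ss

/-- Let `R` be a `K`-vector space and `M` the recursive brace
operation on `R`-decorated planar rooted trees.  For every decorated tree `t` and
decorated trees `s₁,…,sₙ`, `M(t; s₁⋯sₙ)` equals the sum of all decorated trees
obtained by grafting `s₁,…,sₙ` onto vertices of `t`, in all possible ways such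
that in the resulting planar tree the grafted subtrees `s₁,…,sₙ` appear in
left-to-right order. -/
theorem tree_brace_is_sum_of_graftings
    (Mh : PTree R → Forest R → TreeMod K R)
    (star : Forest R → Forest R → ForestMod K R)
    (h : IsTreeBrace Mh star) :
    ∀ (t : PTree R) (ss : List (PTree R)),
      Mh t ss = ((graftT t ss).map fun u => Finsupp.single u (1 : K)).sum := by
  intro t
  induction t using PTree.induction_on_children with
  | node x cs ih =>
    intro ss
    rw [h.apply_node, starRHS_eq_formalSum_graftF ih, ← formalSum_map, ← graftT, formalSum]

end
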